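/- For any step-size parameter γ > 0 and any sequences (yᵗ, zᵗ, xᵗ) generated by the DR splitting method, the following decrease estimate holds for every t ≥ 1: D_γ(yᵗ⁺¹, zᵗ⁺¹, xᵗ⁺¹) − D_γ(yᵗ, zᵗ, xᵗ) ≤ (1/γ)·((1 + γL)² + (5γl)/2 − 3/2)·‖yᵗ⁺¹ − yᵗ‖². -/

import Mathlib

open Filter Topology

/-!
Let `p = ∇f(yᵗ)`, `p₁ = ∇f(yᵗ⁺¹)` and `d = yᵗ⁺¹ - yᵗ`. Completing squares,
`D_γ(y, z, x) = f(y) + g(z) + (‖y - x‖² - ‖z - x‖²) / (2γ)`, and the arguments are changed one at a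
time.

* In `x` and `z`: the step `xᵗ⁺¹ - xᵗ = zᵗ⁺¹ - yᵗ⁺¹` raises `D_γ` by exactly `‖zᵗ⁺¹ - yᵗ⁺¹‖² / γ`.
  By the parallelogram law, `D_γ(yᵗ⁺¹, z, xᵗ) + ‖z - yᵗ⁺¹‖² / γ` is, up to a constant, the function
  of `z` that `zᵗ⁺¹` minimizes, so the two changes together cost at most `‖zᵗ - yᵗ⁺¹‖² / γ`.
  Stationarity of `yᵗ` and `yᵗ⁺¹` gives `zᵗ - yᵗ⁺¹ = γ (p₁ - p)`, which bounds the cost by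
  `(γL)² ‖d‖² / γ`.
* In `y`: by weak convexity of `f` and stationarity of `yᵗ⁺¹`, moving from `yᵗ` to `yᵗ⁺¹` lowers the
  proximal objective by at least `(1/γ - l) ‖d‖² / 2`.

The sum is `((γL)² + γl/2 - 1/2) ‖d‖² / γ`. The constant of the theorem exceeds this one by
`2 (L + l)`, and `(L + l) ‖d‖² ≥ 0` because `-l ‖d‖² ≤ ⟪p₁ - p, d⟫ ≤ L ‖d‖²`.
-/

open Set
open scoped NNReal RealInnerProductSpace

variable {E : Type*} [NormedAddCommGroup E] [InnerProductSpace ℝ E]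

section Gradient

variable [CompleteSpace E] {f : E → ℝ} {s : Set E} {m : ℝ} {u v p q : E}

theorem hasGradientAt_const_mul_norm_sub_sq (k : ℝ) (c u : E) :
    HasGradientAt (fun w => k * ‖w - c‖ ^ 2) ((2 * k) • (u - c)) u := by
  have hdual : InnerProductSpace.toDual ℝ E ((2 * k) • (u - c))
      = k • 2 • (innerSL ℝ (u - c)).comp (ContinuousLinearMap.id ℝ E) := by
    ext d
    simp [mul_comm, mul_left_comm]
  rw [hasGradientAt_iff_hasFDerivAt, hdual]
  exact (((hasFDerivAt_id u).sub_const c).norm_sq).const_mul k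

theorem add_inner_gradient_le_of_convexOn (hf : ConvexOn ℝ s f) (hp : HasGradientAt f p u)
    (hu : u ∈ s) (hv : v ∈ s) : f u + ⟪p, v - u⟫ ≤ f v := by
  have hline : HasDerivAt (f ∘ AffineMap.lineMap u v) ⟪p, v - u⟫ (0 : ℝ) := by
    have hp' : HasFDerivAt f (InnerProductSpace.toDual ℝ E p)
        (AffineMap.lineMap u v (0 : ℝ)) := by
      simpa only [AffineMap.lineMap_apply_zero] using hp.hasFDerivAt
    exact hp'.comp_hasDerivAt 0 AffineMap.hasDerivAt_lineMap
  have hslope := (hf.comp_affineMap (AffineMap.lineMap u v)).le_slope_of_hasDerivAt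
    (x := 0) (y := 1) (by simpa using hu) (by simpa using hv) one_pos hline
  rw [slope_def_field] at hslope
  simp only [Function.comp_apply, AffineMap.lineMap_apply_zero, AffineMap.lineMap_apply_one,
    sub_zero, div_one] at hslope
  linarith

theorem add_inner_gradient_add_le_of_strongConvexOn (hf : StrongConvexOn s m f)
    (hp : HasGradientAt f p u) (hu : u ∈ s) (hv : v ∈ s) :
    f u + ⟪p, v - u⟫ + m / 2 * ‖v - u‖ ^ 2 ≤ f v := by
  have hgrad : HasGradientAt (fun w => f w - m / 2 * ‖w‖ ^ 2) (p - m • u) u := by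
    have := hp.hasFDerivAt.sub (hasGradientAt_const_mul_norm_sub_sq (m / 2) 0 u).hasFDerivAt
    rw [hasGradientAt_iff_hasFDerivAt, map_sub]
    simpa [mul_div_cancel₀] using! this
  have hconv := add_inner_gradient_le_of_convexOn (strongConvexOn_iff_convex.1 hf) hgrad hu hv
  have hinner : ⟪m • u, v - u⟫ = m * (⟪v, u⟫ - ‖u‖ ^ 2) := by
    rw [real_inner_smul_left, inner_sub_right, real_inner_self_eq_norm_sq, real_inner_comm]
  rw [inner_sub_left, hinner] at hconv
  rw [norm_sub_sq_real]
  linarith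

theorem mul_norm_sub_sq_le_inner_gradient_sub (hf : StrongConvexOn s m f)
    (hp : HasGradientAt f p u) (hq : HasGradientAt f q v) (hu : u ∈ s) (hv : v ∈ s) :
    m * ‖v - u‖ ^ 2 ≤ ⟪q - p, v - u⟫ := by
  have huv := add_inner_gradient_add_le_of_strongConvexOn hf hp hu hv
  have hvu := add_inner_gradient_add_le_of_strongConvexOn hf hq hv hu
  rw [← neg_sub v u, inner_neg_right, norm_neg] at hvu
  rw [inner_sub_left]
  linarith

theorem mul_norm_sub_sq_le_of_strongConvexOn_of_lipschitzWith {f' : E → E} {K : ℝ≥0}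
    (hf : StrongConvexOn univ m f) (hgrad : ∀ w, HasGradientAt f (f' w) w)
    (hlip : LipschitzWith K f') (u v : E) : m * ‖v - u‖ ^ 2 ≤ K * ‖v - u‖ ^ 2 :=
  calc m * ‖v - u‖ ^ 2
      ≤ ⟪f' v - f' u, v - u⟫ :=
        mul_norm_sub_sq_le_inner_gradient_sub hf (hgrad u) (hgrad v) (mem_univ u) (mem_univ v)
    _ ≤ ‖f' v - f' u‖ * ‖v - u‖ := real_inner_le_norm _ _
    _ ≤ K * ‖v - u‖ * ‖v - u‖ := by gcongr; exact hlip.norm_sub_le v u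
    _ = K * ‖v - u‖ ^ 2 := by ring

end Gradient

section Prox

variable [CompleteSpace E] {f : E → ℝ} {γ m : ℝ} {c u p : E}

theorem eq_add_smul_gradient_of_isMinOn_prox (hγ : γ ≠ 0) (hp : HasGradientAt f p u)
    (hmin : IsMinOn (fun w => f w + 1 / (2 * γ) * ‖w - c‖ ^ 2) univ u) : c = u + γ • p := by
  have hgrad := hp.hasFDerivAt.add
    (hasGradientAt_const_mul_norm_sub_sq (1 / (2 * γ)) c u).hasFDerivAt
  have hzero : p + (2 * (1 / (2 * γ))) • (u - c) = 0 := by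
    have := (hmin.isLocalMin univ_mem).hasFDerivAt_eq_zero hgrad
    rwa [← map_add, LinearIsometryEquiv.map_eq_zero_iff] at this
  have hscale : γ * (2 * (1 / (2 * γ))) = 1 := by field_simp
  have := congrArg (γ • ·) hzero
  simp only [smul_add, smul_smul, hscale, one_smul, smul_zero] at this
  rw [← sub_eq_zero, ← neg_eq_zero, ← this]
  abel

theorem prox_objective_add_le_of_isMinOn (hγ : γ ≠ 0) (hf : StrongConvexOn univ m f)
    (hp : HasGradientAt f p u)
    (hmin : IsMinOn (fun w => f w + 1 / (2 * γ) * ‖w - c‖ ^ 2) univ u) (v : E) :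
    f u + 1 / (2 * γ) * ‖u - c‖ ^ 2 + (1 / γ + m) / 2 * ‖v - u‖ ^ 2
      ≤ f v + 1 / (2 * γ) * ‖v - c‖ ^ 2 := by
  have hconv := add_inner_gradient_add_le_of_strongConvexOn hf hp (mem_univ u) (mem_univ v)
  have hc : u - c = -(γ • p) := by
    rw [eq_add_smul_gradient_of_isMinOn_prox hγ hp hmin]
    abel
  have hexpand : ‖v - c‖ ^ 2 = ‖v - u‖ ^ 2 - 2 * γ * ⟪p, v - u⟫ + ‖u - c‖ ^ 2 := by
    rw [← sub_add_sub_cancel v u c, norm_add_sq_real, hc, inner_neg_right, real_inner_smul_right,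
      real_inner_comm]
    ring
  calc f u + 1 / (2 * γ) * ‖u - c‖ ^ 2 + (1 / γ + m) / 2 * ‖v - u‖ ^ 2
      = (f u + ⟪p, v - u⟫ + m / 2 * ‖v - u‖ ^ 2) + 1 / (2 * γ) * ‖v - c‖ ^ 2 := by
        rw [hexpand]
        field_simp
        ring
    _ ≤ f v + 1 / (2 * γ) * ‖v - c‖ ^ 2 := by gcongr

end Prox

/-- The Douglas–Rachford merit function `D_γ(y, z, x)` of the pair `(f, g)`. -/
noncomputable def drMerit (f : E → ℝ) (g : E → EReal) (γ : ℝ) (y z x : E) : EReal :=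
  f y + g z + ((-(1 / (2 * γ)) * ‖y - z‖ ^ 2 + 1 / γ * ⟪x - y, z - y⟫ : ℝ) : EReal)

/-- The sequences `y`, `z`, `x` are generated by Douglas–Rachford splitting for `f + g` with step
size `γ`. Minimizers need not be unique, so this is a relation; `y 0` and `z 0` are
unconstrained. -/
structure IsDRSequence (f : E → ℝ) (g : E → EReal) (γ : ℝ) (y z x : ℕ → E) : Prop where
  isMinOn_y (t : ℕ) : IsMinOn (fun w => f w + 1 / (2 * γ) * ‖w - x t‖ ^ 2) univ (y (t + 1))
  isMinOn_z (t : ℕ) : IsMinOn (fun w => g w +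
    ((1 / (2 * γ) * ‖(2 : ℝ) • y (t + 1) - x t - w‖ ^ 2 : ℝ) : EReal)) univ (z (t + 1))
  x_succ (t : ℕ) : x (t + 1) = x t + (z (t + 1) - y (t + 1))

section Merit

variable {f : E → ℝ} {g : E → EReal} {γ : ℝ} {x y z : E}

theorem drMerit_eq_add_norm_sq_sub_norm_sq (f : E → ℝ) (g : E → EReal) (γ : ℝ) (y z x : E) :
    drMerit f g γ y z x
      = g z + ((f y + 1 / (2 * γ) * ‖y - x‖ ^ 2 - 1 / (2 * γ) * ‖z - x‖ ^ 2 : ℝ) : EReal) := by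
  have hpolar : ‖z - x‖ ^ 2 = ‖y - z‖ ^ 2 - 2 * ⟪x - y, z - y⟫ + ‖y - x‖ ^ 2 := by
    rw [← sub_sub_sub_cancel_right z x y, norm_sub_sq_real, norm_sub_rev z y, norm_sub_rev x y,
      real_inner_comm]
  rw [drMerit, add_comm (f y : EReal), add_assoc, ← EReal.coe_add, hpolar]
  congr 2
  ring

theorem norm_two_smul_sub_sub_sq (x y z : E) :
    ‖(2 : ℝ) • y - x - z‖ ^ 2 = 2 * ‖y - x‖ ^ 2 + 2 * ‖z - y‖ ^ 2 - ‖z - x‖ ^ 2 := by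
  have hpar := parallelogram_law_with_norm ℝ (y - x) (z - y)
  rw [show y - x + (z - y) = z - x by abel,
    show y - x - (z - y) = (2 : ℝ) • y - x - z by module] at hpar
  linarith

theorem drMerit_add_sub (f : E → ℝ) (g : E → EReal) (γ : ℝ) (y z x : E) :
    drMerit f g γ y z (x + (z - y))
      = drMerit f g γ y z x + ((1 / γ * ‖z - y‖ ^ 2 : ℝ) : EReal) := by
  simp only [drMerit_eq_add_norm_sq_sub_norm_sq]
  rw [add_assoc, ← EReal.coe_add, show y - (x + (z - y)) = (2 : ℝ) • y - x - z by module,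
    show z - (x + (z - y)) = y - x by abel, norm_two_smul_sub_sub_sq]
  congr 2
  ring

theorem drMerit_add_le_of_isMinOn_z
    (hmin : IsMinOn (fun w => g w +
      ((1 / (2 * γ) * ‖(2 : ℝ) • y - x - w‖ ^ 2 : ℝ) : EReal)) univ z) (w : E) :
    drMerit f g γ y z x + ((1 / γ * ‖z - y‖ ^ 2 : ℝ) : EReal)
      ≤ drMerit f g γ y w x + ((1 / γ * ‖w - y‖ ^ 2 : ℝ) : EReal) := by
  have hmerit (w : E) : drMerit f g γ y w x + ((1 / γ * ‖w - y‖ ^ 2 : ℝ) : EReal)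
      = g w + ((1 / (2 * γ) * ‖(2 : ℝ) • y - x - w‖ ^ 2 : ℝ) : EReal)
        + ((f y - 1 / (2 * γ) * ‖y - x‖ ^ 2 : ℝ) : EReal) := by
    rw [drMerit_eq_add_norm_sq_sub_norm_sq, add_assoc, add_assoc, ← EReal.coe_add,
      ← EReal.coe_add, norm_two_smul_sub_sub_sq]
    congr 2
    ring
  rw [hmerit, hmerit]
  exact add_le_add_left (isMinOn_univ_iff.1 hmin w) _

theorem drMerit_le_of_isMinOn_y [CompleteSpace E] {m : ℝ} {u p : E} (hγ : γ ≠ 0)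
    (hf : StrongConvexOn univ m f) (hp : HasGradientAt f p u)
    (hmin : IsMinOn (fun w => f w + 1 / (2 * γ) * ‖w - x‖ ^ 2) univ u) (v : E) :
    drMerit f g γ u z x
      ≤ drMerit f g γ v z x + ((-((1 / γ + m) / 2 * ‖v - u‖ ^ 2) : ℝ) : EReal) := by
  have hgrowth := prox_objective_add_le_of_isMinOn hγ hf hp hmin v
  rw [drMerit_eq_add_norm_sq_sub_norm_sq, drMerit_eq_add_norm_sq_sub_norm_sq, add_assoc,
    ← EReal.coe_add]
  gcongr
  linarith

end Merit

section DouglasRachford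

variable [CompleteSpace E] {f : E → ℝ} {f' : E → E} {K : ℝ≥0} {l γ : ℝ} {g : E → EReal}
  {x y z : ℕ → E}

theorem IsDRSequence.z_succ_sub_y_succ_succ (h : IsDRSequence f g γ y z x) (hγ : γ ≠ 0)
    (hgrad : ∀ w, HasGradientAt f (f' w) w) (t : ℕ) :
    z (t + 1) - y (t + 2) = γ • (f' (y (t + 2)) - f' (y (t + 1))) := by
  have hx₀ := eq_add_smul_gradient_of_isMinOn_prox hγ (hgrad _) (h.isMinOn_y t)
  have hx₁ := eq_add_smul_gradient_of_isMinOn_prox hγ (hgrad _) (h.isMinOn_y (t + 1))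
  have hstep := h.x_succ t
  rw [hx₀, hx₁, ← sub_eq_zero] at hstep
  rw [← sub_eq_zero, ← neg_eq_zero, ← hstep]
  module

theorem IsDRSequence.norm_z_succ_sub_y_succ_succ_le (h : IsDRSequence f g γ y z x) (hγ : 0 < γ)
    (hgrad : ∀ w, HasGradientAt f (f' w) w) (hlip : LipschitzWith K f') (t : ℕ) :
    ‖z (t + 1) - y (t + 2)‖ ≤ γ * (K * ‖y (t + 2) - y (t + 1)‖) := by
  rw [h.z_succ_sub_y_succ_succ hγ.ne' hgrad, norm_smul, Real.norm_of_nonneg hγ.le]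
  gcongr
  exact hlip.norm_sub_le _ _

theorem IsDRSequence.drMerit_succ_le (h : IsDRSequence f g γ y z x) (hγ : 0 < γ) {m : ℝ}
    (hf : StrongConvexOn univ m f) (hgrad : ∀ w, HasGradientAt f (f' w) w)
    (hlip : LipschitzWith K f') {t : ℕ} (ht : 1 ≤ t) :
    drMerit f g γ (y (t + 1)) (z (t + 1)) (x (t + 1))
      ≤ drMerit f g γ (y t) (z t) (x t)
        + ((1 / γ * ((γ * K) ^ 2 - γ * m / 2 - 1 / 2) * ‖y (t + 1) - y t‖ ^ 2 : ℝ) : EReal) := by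
  obtain ⟨t, rfl⟩ := Nat.exists_eq_add_of_le' ht
  calc drMerit f g γ (y (t + 2)) (z (t + 2)) (x (t + 2))
      = drMerit f g γ (y (t + 2)) (z (t + 2)) (x (t + 1))
          + ((1 / γ * ‖z (t + 2) - y (t + 2)‖ ^ 2 : ℝ) : EReal) := by
        rw [h.x_succ (t + 1), drMerit_add_sub]
    _ ≤ drMerit f g γ (y (t + 2)) (z (t + 1)) (x (t + 1))
          + ((1 / γ * ‖z (t + 1) - y (t + 2)‖ ^ 2 : ℝ) : EReal) :=
        drMerit_add_le_of_isMinOn_z (h.isMinOn_z (t + 1)) _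
    _ ≤ drMerit f g γ (y (t + 1)) (z (t + 1)) (x (t + 1))
          + ((-((1 / γ + m) / 2 * ‖y (t + 1) - y (t + 2)‖ ^ 2) : ℝ) : EReal)
          + ((1 / γ * (γ * (K * ‖y (t + 2) - y (t + 1)‖)) ^ 2 : ℝ) : EReal) := by
        gcongr
        · exact drMerit_le_of_isMinOn_y hγ.ne' hf (hgrad _) (h.isMinOn_y (t + 1)) _
        · exact h.norm_z_succ_sub_y_succ_succ_le hγ hgrad hlip t
    _ = _ := by
        rw [add_assoc, ← EReal.coe_add, norm_sub_rev (y (t + 1))]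
        congr 2
        field_simp
        ring

theorem stmt1_general (hgrad : ∀ w, HasGradientAt f (f' w) w) (hlip : LipschitzWith K f')
    (hconv : ConvexOn ℝ univ (fun w => f w + l / 2 * ‖w‖ ^ 2)) (hγ : 0 < γ)
    (h : IsDRSequence f g γ y z x) {t : ℕ} (ht : 1 ≤ t) :
    drMerit f g γ (y (t + 1)) (z (t + 1)) (x (t + 1))
      ≤ drMerit f g γ (y t) (z t) (x t)
        + ((1 / γ * ((1 + γ * K) ^ 2 + 5 * γ * l / 2 - 3 / 2) * ‖y (t + 1) - y t‖ ^ 2 : ℝ)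
          : EReal) := by
  have hstrong : StrongConvexOn univ (-l) f :=
    strongConvexOn_iff_convex.2 <| by simpa only [neg_div, neg_mul, sub_neg_eq_add] using hconv
  have hKl :=
    mul_norm_sub_sq_le_of_strongConvexOn_of_lipschitzWith hstrong hgrad hlip (y t) (y (t + 1))
  have hgap : 1 / γ * ((1 + γ * K) ^ 2 + 5 * γ * l / 2 - 3 / 2)
      = 1 / γ * ((γ * K) ^ 2 - γ * -l / 2 - 1 / 2) + 2 * (K + l) := by
    field_simp
    ring
  refine (h.drMerit_succ_le hγ hstrong hgrad hlip ht).trans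
    (add_le_add_right (EReal.coe_le_coe ?_) _)
  rw [hgap]
  linarith

end DouglasRachford

theorem stmt1 {n : ℕ}
    (f : EuclideanSpace ℝ (Fin n) → ℝ)
    (f' : EuclideanSpace ℝ (Fin n) → EuclideanSpace ℝ (Fin n))
    (L l : ℝ) (hL : 0 < L)
    (hgrad : ∀ w, HasGradientAt f (f' w) w)
    (hlip : LipschitzWith L.toNNReal f')
    (hconv : ConvexOn ℝ Set.univ (fun w => f w + l / 2 * ‖w‖ ^ 2))
    (g : EuclideanSpace ℝ (Fin n) → EReal)
    (hg_proper : ∃ w, g w ≠ ⊤) (hg_ne_bot : ∀ w, g w ≠ ⊥)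
    (hg_lsc : LowerSemicontinuous g)
    (γ : ℝ) (hγ : 0 < γ)
    (x y z : ℕ → EuclideanSpace ℝ (Fin n))
    (hy : ∀ t, ∀ w, f (y (t + 1)) + 1 / (2 * γ) * ‖y (t + 1) - x t‖ ^ 2
        ≤ f w + 1 / (2 * γ) * ‖w - x t‖ ^ 2)
    (hz : ∀ t, ∀ w, g (z (t + 1))
          + ((1 / (2 * γ) * ‖(2 : ℝ) • y (t + 1) - x t - z (t + 1)‖ ^ 2 : ℝ) : EReal)
        ≤ g w + ((1 / (2 * γ) * ‖(2 : ℝ) • y (t + 1) - x t - w‖ ^ 2 : ℝ) : EReal))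
    (hx : ∀ t, x (t + 1) = x t + (z (t + 1) - y (t + 1)))
    (D : EuclideanSpace ℝ (Fin n) → EuclideanSpace ℝ (Fin n) → EuclideanSpace ℝ (Fin n) → EReal)
    (hD : ∀ a b c, D a b c
        = (f a : EReal) + g b
          + ((-(1 / (2 * γ)) * ‖a - b‖ ^ 2 + 1 / γ * (inner ℝ (c - a) (b - a) : ℝ) : ℝ) : EReal)) :
    ∀ t, 1 ≤ t →
      D (y (t + 1)) (z (t + 1)) (x (t + 1))
        ≤ D (y t) (z t) (x t)
          + ((1 / γ * ((1 + γ * L) ^ 2 + 5 * γ * l / 2 - 3 / 2) * ‖y (t + 1) - y t‖ ^ 2 : ℝ) : EReal) := by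
  intro t ht
  rw [show D = drMerit f g γ from funext fun a => funext fun b => funext (hD a b)]
  simpa only [Real.coe_toNNReal L hL.le] using stmt1_general hgrad hlip hconv hγ
    ⟨fun t => isMinOn_univ_iff.2 (hy t), fun t => isMinOn_univ_iff.2 (hz t), hx⟩ ht
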